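/- arXiv:2511.01996 — 7 statements merged into one kernel-verified Lean document; each statement's English description precedes it below -/
import Mathlib

section
/- Let H be a finite-dimensional complex Hilbert space, Ŷ a self-adjoint operator on H with nondegenerate spectrum and orthonormal eigenbasis (φ_y)_{y∈σ(Ŷ)}, X̂ an operator on H, and ρ̂ a density matrix with ⟨φ_y, ρ̂ φ_y⟩ ≠ 0 for all y ∈ σ(Ŷ). Then the function f ↦ Tr(ρ̂ (X̂ − f(Ŷ))† (X̂ − f(Ŷ))), over functions f : σ(Ŷ) → ℂ, admits the unique minimizer f₀^ℓ(y) = ⟨φ_y, X̂ ρ̂ φ_y⟩ / ⟨φ_y, ρ̂ φ_y⟩. -/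
open scoped ComplexOrder
noncomputable section

variable {H : Type*} [NormedAddCommGroup H] [InnerProductSpace ℂ H] [FiniteDimensional ℂ H]

/-- The rank-one orthogonal projector onto the line spanned by a unit vector `v`. -/
def proj (v : H) : H →ₗ[ℂ] H where
  toFun w := (inner ℂ v w : ℂ) • v
  map_add' x y := by simp [inner_add_right, add_smul]
  map_smul' c x := by simp [inner_smul_right, smul_smul]

/-- The operator `f(Ŷ) = Σ_y f(y) Π_y` associated to a function `f` on the spectrum,
for an operator with orthonormal eigenbasis `φ`. -/
def opF {ι : Type*} [Fintype ι] (φ : ι → H) (f : ι → ℂ) : H →ₗ[ℂ] H :=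
  ∑ i, f i • proj (φ i)


/-- The "left" squared error `Tr(ρ̂ (X̂ − f(Ŷ))† (X̂ − f(Ŷ)))`. -/
def errL {ι : Type*} [Fintype ι] (φ : ι → H) (ρ X : H →ₗ[ℂ] H) (f : ι → ℂ) : ℂ :=
  LinearMap.trace ℂ H
    (ρ ∘ₗ (LinearMap.adjoint (X - opF φ f) ∘ₗ (X - opF φ f)))

theorem errL_eq_sum {ι : Type*} [Fintype ι] (φ : OrthonormalBasis ι ℂ H)
    (ρ X : H →ₗ[ℂ] H) (f : ι → ℂ) :
    errL (fun i => φ i) ρ X f =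
      ∑ i, (inner ℂ (LinearMap.adjoint X (φ i) - (starRingEnd ℂ (f i)) • φ i)
        (ρ (LinearMap.adjoint X (φ i) - (starRingEnd ℂ (f i)) • φ i)) : ℂ) := by
  classical
  have hF : ∀ i (w : H), (inner ℂ (opF (fun i => φ i) f w) (φ i) : ℂ) =
      inner ℂ w ((starRingEnd ℂ (f i)) • φ i) := by
    intro i w
    simp only [opF, proj, LinearMap.sum_apply, LinearMap.smul_apply, LinearMap.coe_mk,
      AddHom.coe_mk, sum_inner, inner_smul_left, inner_smul_right,
      orthonormal_iff_ite.mp φ.orthonormal, inner_conj_symm]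
    simp
  have hA : ∀ i, LinearMap.adjoint (X - opF (fun i => φ i) f) (φ i) =
      LinearMap.adjoint X (φ i) - (starRingEnd ℂ (f i)) • φ i := by
    intro i
    refine ext_inner_left ℂ fun w => ?_
    rw [LinearMap.adjoint_inner_right, inner_sub_right, LinearMap.adjoint_inner_right,
      LinearMap.sub_apply, inner_sub_left, hF]
  unfold errL
  rw [← LinearMap.comp_assoc, LinearMap.trace_comp_comm', LinearMap.trace_eq_sum_inner _ φ]
  refine Finset.sum_congr rfl fun i _ => ?_
  rw [LinearMap.comp_apply, LinearMap.comp_apply, hA, ← hA i, LinearMap.adjoint_inner_left]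

theorem errL_split {ι : Type*} [Fintype ι] (φ : OrthonormalBasis ι ℂ H)
    (ρ : H →ₗ[ℂ] H) (hpos : ∀ v, 0 ≤ (inner ℂ v (ρ v) : ℂ))
    (hρ : ∀ i, (inner ℂ (φ i) (ρ (φ i)) : ℂ) ≠ 0) (X : H →ₗ[ℂ] H) (f g : ι → ℂ)
    (hg : g = fun i => (inner ℂ (φ i) ((X ∘ₗ ρ) (φ i)) : ℂ) / (inner ℂ (φ i) (ρ (φ i)) : ℂ)) :
    errL (fun i => φ i) ρ X f = errL (fun i => φ i) ρ X g +
      ∑ i, (inner ℂ (starRingEnd ℂ (g i - f i) • φ i)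
        (ρ (starRingEnd ℂ (g i - f i) • φ i)) : ℂ) := by
  have hsym : ρ.IsSymmetric := by
    rw [LinearMap.isSymmetric_iff_inner_map_self_real]
    intro v
    have h := hpos v
    have h2 : (starRingEnd ℂ) (inner ℂ v (ρ v) : ℂ) = inner ℂ v (ρ v) :=
      Complex.conj_eq_iff_im.mpr (Complex.le_def.mp h).2.symm
    rw [inner_conj_symm] at h2 ⊢
    exact h2.symm
  rw [errL_eq_sum, errL_eq_sum, ← Finset.sum_add_distrib]
  refine Finset.sum_congr rfl fun i _ => ?_
  set w := LinearMap.adjoint X (φ i) - (starRingEnd ℂ (g i)) • φ i with hw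
  have h0 : (inner ℂ w (ρ (φ i)) : ℂ) = 0 := by
    rw [hw, inner_sub_left, LinearMap.adjoint_inner_left, inner_smul_left, hg]
    simp [hρ i]
  have h1 : (inner ℂ (φ i) (ρ w) : ℂ) = 0 := by
    rw [← hsym, ← inner_conj_symm, h0, map_zero]
  have h2 : LinearMap.adjoint X (φ i) - (starRingEnd ℂ (f i)) • φ i =
      w + starRingEnd ℂ (g i - f i) • φ i := by
    rw [hw, map_sub, sub_smul]; abel
  rw [h2]
  simp only [map_add, map_smul, inner_add_left, inner_add_right, inner_smul_left,
    inner_smul_right, h0, h1]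
  ring

/-- for `Ŷ` self-adjoint with nondegenerate spectrum (orthonormal eigenbasis `φ`,
injective real eigenvalues `y`), `X̂` an operator, and `ρ̂` a density matrix with
`⟨φ_y, ρ̂ φ_y⟩ ≠ 0` for all `y`, the map `f ↦ Tr(ρ̂ (X̂ − f(Ŷ))† (X̂ − f(Ŷ)))` has the unique
minimizer `f₀^ℓ(y) = ⟨φ_y, X̂ρ̂ φ_y⟩ / ⟨φ_y, ρ̂ φ_y⟩`. -/
theorem stmt3 {ι : Type*} [Fintype ι] (φ : OrthonormalBasis ι ℂ H)
    (Y : H →ₗ[ℂ] H) (y : ι → ℝ) (hy : Function.Injective y)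
    (hY : ∀ i, Y (φ i) = (y i : ℂ) • φ i)
    (ρ : H →ₗ[ℂ] H) (hpos : ∀ v, 0 ≤ (inner ℂ v (ρ v) : ℂ))
    (htr : LinearMap.trace ℂ H ρ = 1)
    (hρ : ∀ i, (inner ℂ (φ i) (ρ (φ i)) : ℂ) ≠ 0) (X : H →ₗ[ℂ] H) :
    (∀ f : ι → ℂ,
      errL (fun i => φ i) ρ X
          (fun i => (inner ℂ (φ i) ((X ∘ₗ ρ) (φ i)) : ℂ) / (inner ℂ (φ i) (ρ (φ i)) : ℂ)) ≤
        errL (fun i => φ i) ρ X f) ∧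
    (∀ f : ι → ℂ, (∀ g : ι → ℂ, errL (fun i => φ i) ρ X f ≤ errL (fun i => φ i) ρ X g) →
      f = fun i => (inner ℂ (φ i) ((X ∘ₗ ρ) (φ i)) : ℂ) / (inner ℂ (φ i) (ρ (φ i)) : ℂ)) := by
  refine ⟨fun f => ?_, fun f hf => ?_⟩
  · rw [errL_split φ ρ hpos hρ X f _ rfl]
    exact le_add_of_nonneg_right (Finset.sum_nonneg fun i _ => hpos _)
  · have h := hf (fun i => (inner ℂ (φ i) ((X ∘ₗ ρ) (φ i)) : ℂ) / (inner ℂ (φ i) (ρ (φ i)) : ℂ))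
    rw [errL_split φ ρ hpos hρ X f _ rfl] at h
    have h1 := le_antisymm ((add_le_iff_nonpos_right _).mp h) (Finset.sum_nonneg fun i _ => hpos _)
    rw [Finset.sum_eq_zero_iff_of_nonneg (fun i _ => hpos _)] at h1
    funext i
    have h2 := h1 i (Finset.mem_univ i)
    rw [map_smul, inner_smul_left, inner_smul_right] at h2
    simp only [mul_eq_zero, hρ i, or_false, map_eq_zero, or_self] at h2
    exact (sub_eq_zero.mp h2).symm
end
end

section
/- Let H be a finite-dimensional complex Hilbert space, Ŷ a self-adjoint operator on H with nondegenerate spectrum and orthonormal eigenbasis (φ_y)_{y∈σ(Ŷ)}, X̂ an operator on H, and ρ̂ a density matrix with ⟨φ_y, ρ̂ φ_y⟩ ≠ 0 for all y ∈ σ(Ŷ). Then the function f ↦ Tr(ρ̂ (X̂ − f(Ŷ)) (X̂ − f(Ŷ))†), over functions f : σ(Ŷ) → ℂ, admits the unique minimizer f₀^r(y) = ⟨φ_y, ρ̂ X̂ φ_y⟩ / ⟨φ_y, ρ̂ φ_y⟩. -/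
open scoped ComplexOrder
noncomputable section

variable {H : Type*} [NormedAddCommGroup H] [InnerProductSpace ℂ H] [FiniteDimensional ℂ H]

/-- The "right" squared error `Tr(ρ̂ (X̂ − f(Ŷ)) (X̂ − f(Ŷ))†)`. -/
def errR {ι : Type*} [Fintype ι] (φ : ι → H) (ρ X : H →ₗ[ℂ] H) (f : ι → ℂ) : ℂ :=
  LinearMap.trace ℂ H
    (ρ ∘ₗ ((X - opF φ f) ∘ₗ LinearMap.adjoint (X - opF φ f)))

theorem errR_eq_sum {ι : Type*} [Fintype ι] (φ : OrthonormalBasis ι ℂ H)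
    (ρ X : H →ₗ[ℂ] H) (f : ι → ℂ) :
    errR (fun i => φ i) ρ X f =
      ∑ i, (inner ℂ (X (φ i) - f i • φ i) (ρ (X (φ i) - f i • φ i)) : ℂ) := by
  classical
  have hop : ∀ i, opF (fun i => φ i) f (φ i) = f i • φ i := by
    intro i
    simp [opF, proj, LinearMap.sum_apply, orthonormal_iff_ite.mp φ.orthonormal]
  unfold errR
  rw [← LinearMap.comp_assoc, LinearMap.trace_comp_comm', LinearMap.trace_eq_sum_inner _ φ]
  refine Finset.sum_congr rfl fun i _ => ?_
  simp only [LinearMap.comp_apply, LinearMap.adjoint_inner_right, LinearMap.sub_apply, hop]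

theorem errR_split {ι : Type*} [Fintype ι] (φ : OrthonormalBasis ι ℂ H)
    (ρ : H →ₗ[ℂ] H) (hpos : ∀ v, 0 ≤ (inner ℂ v (ρ v) : ℂ))
    (hρ : ∀ i, (inner ℂ (φ i) (ρ (φ i)) : ℂ) ≠ 0) (X : H →ₗ[ℂ] H) (f f₀ : ι → ℂ)
    (hf₀ : ∀ i, f₀ i = (inner ℂ (φ i) (ρ (X (φ i))) : ℂ) / (inner ℂ (φ i) (ρ (φ i)) : ℂ)) :
    errR (fun i => φ i) ρ X f = errR (fun i => φ i) ρ X f₀ +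
      ∑ i, (starRingEnd ℂ (f i - f₀ i) * (f i - f₀ i)) * (inner ℂ (φ i) (ρ (φ i)) : ℂ) := by
  have hsym : ρ.IsSymmetric := by
    rw [LinearMap.isSymmetric_iff_inner_map_self_real]
    intro v
    have h := (Complex.nonneg_iff.mp (hpos v)).2
    rw [inner_conj_symm, ← inner_conj_symm (ρ v) v]
    exact (Complex.conj_eq_iff_im.mpr h.symm).symm
  rw [errR_eq_sum, errR_eq_sum, ← Finset.sum_add_distrib]
  refine Finset.sum_congr rfl fun i _ => ?_
  have h1 : (inner ℂ (φ i) (ρ (X (φ i) - f₀ i • φ i)) : ℂ) = 0 := by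
    rw [map_sub, map_smul, inner_sub_right, inner_smul_right, hf₀, div_mul_cancel₀ _ (hρ i),
      sub_self]
  have h2 : (inner ℂ (X (φ i) - f₀ i • φ i) (ρ (φ i)) : ℂ) = 0 := by
    rw [← hsym, ← inner_conj_symm, h1, map_zero]
  have h3 : X (φ i) - f i • φ i = (X (φ i) - f₀ i • φ i) - (f i - f₀ i) • φ i := by
    rw [sub_smul]; abel
  rw [h3]
  generalize X (φ i) - f₀ i • φ i = u at *
  rw [map_sub, map_smul, inner_sub_right, inner_sub_left, inner_sub_left, inner_smul_right,
    inner_smul_right, inner_smul_left, inner_smul_left, h1, h2]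
  ring

/-- for `Ŷ` self-adjoint with nondegenerate spectrum (orthonormal eigenbasis `φ`,
injective real eigenvalues `y`), `X̂` an operator, and `ρ̂` a density matrix with
`⟨φ_y, ρ̂ φ_y⟩ ≠ 0` for all `y`, the map `f ↦ Tr(ρ̂ (X̂ − f(Ŷ)) (X̂ − f(Ŷ))†)` has the unique
minimizer `f₀^r(y) = ⟨φ_y, ρ̂X̂ φ_y⟩ / ⟨φ_y, ρ̂ φ_y⟩`. -/
theorem stmt4 {ι : Type*} [Fintype ι] (φ : OrthonormalBasis ι ℂ H)
    (Y : H →ₗ[ℂ] H) (y : ι → ℝ) (hy : Function.Injective y)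
    (hY : ∀ i, Y (φ i) = (y i : ℂ) • φ i)
    (ρ : H →ₗ[ℂ] H) (hpos : ∀ v, 0 ≤ (inner ℂ v (ρ v) : ℂ))
    (htr : LinearMap.trace ℂ H ρ = 1)
    (hρ : ∀ i, (inner ℂ (φ i) (ρ (φ i)) : ℂ) ≠ 0) (X : H →ₗ[ℂ] H) :
    (∀ f : ι → ℂ,
      errR (fun i => φ i) ρ X
          (fun i => (inner ℂ (φ i) ((ρ ∘ₗ X) (φ i)) : ℂ) / (inner ℂ (φ i) (ρ (φ i)) : ℂ)) ≤
        errR (fun i => φ i) ρ X f) ∧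
    (∀ f : ι → ℂ, (∀ g : ι → ℂ, errR (fun i => φ i) ρ X f ≤ errR (fun i => φ i) ρ X g) →
      f = fun i => (inner ℂ (φ i) ((ρ ∘ₗ X) (φ i)) : ℂ) / (inner ℂ (φ i) (ρ (φ i)) : ℂ)) := by
  set f₀ : ι → ℂ := fun i =>
    (inner ℂ (φ i) ((ρ ∘ₗ X) (φ i)) : ℂ) / (inner ℂ (φ i) (ρ (φ i)) : ℂ) with hf₀
  have key := fun f => errR_split φ ρ hpos hρ X f f₀ (fun i => rfl)
  have hnn : ∀ (f : ι → ℂ) (i : ι),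
      0 ≤ (starRingEnd ℂ (f i - f₀ i) * (f i - f₀ i)) * (inner ℂ (φ i) (ρ (φ i)) : ℂ) :=
    fun f i => mul_nonneg (star_mul_self_nonneg (f i - f₀ i)) (hpos _)
  refine ⟨fun f => ?_, fun f hf => ?_⟩
  · rw [key f]
    exact le_add_of_nonneg_right (Finset.sum_nonneg fun i _ => hnn f i)
  · have h := hf f₀
    rw [key f] at h
    have h0 := le_antisymm (by simpa using h) (Finset.sum_nonneg fun i _ => hnn f i)
    rw [Finset.sum_eq_zero_iff_of_nonneg (fun i _ => hnn f i)] at h0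
    funext i
    have hi := h0 i (Finset.mem_univ i)
    have hi' := (mul_eq_zero.mp hi).resolve_right (hρ i)
    rcases mul_eq_zero.mp hi' with h | h
    · exact sub_eq_zero.mp ((map_eq_zero _).mp h)
    · exact sub_eq_zero.mp h
end
end

section
/- Let H be a finite-dimensional complex Hilbert space, Ŷ a self-adjoint operator on H with nondegenerate spectrum, 𝒴 the algebra of operators that are functions of Ŷ, and ρ̂ a density matrix with ⟨φ_y, ρ̂ φ_y⟩ ≠ 0 for all y ∈ σ(Ŷ). Then there exists a unique map ℰ : 𝓛(H) → 𝒴 such that (1) ℰ(f(Ŷ)X̂) = f(Ŷ)ℰ(X̂) for every X̂ ∈ 𝓛(H) and every f : σ(Ŷ) → ℂ, and (2) Tr(ρ̂ ℰ(X̂)) = Tr(ρ̂ X̂) for every X̂ ∈ 𝓛(H); moreover this map is ℰ(X̂) = 𝔼^ℓ_ρ̂(X̂|Ŷ) := Σ_{y∈σ(Ŷ)} (⟨φ_y, X̂ρ̂ φ_y⟩/⟨φ_y, ρ̂ φ_y⟩) Π_y. -/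
open scoped ComplexOrder
noncomputable section

variable {H : Type*} [NormedAddCommGroup H] [InnerProductSpace ℂ H] [FiniteDimensional ℂ H]

/-- The left quantum conditional expectation
`𝔼^ℓ_ρ̂(X̂|Ŷ) = Σ_y (⟨φ_y, X̂ρ̂ φ_y⟩/⟨φ_y, ρ̂ φ_y⟩) Π_y`. -/
def EcondL {ι : Type*} [Fintype ι] (φ : ι → H) (ρ X : H →ₗ[ℂ] H) : H →ₗ[ℂ] H :=
  ∑ i, ((inner ℂ (φ i) ((X ∘ₗ ρ) (φ i)) : ℂ) / (inner ℂ (φ i) (ρ (φ i)) : ℂ)) • proj (φ i)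

/-- The characterizing properties of the left quantum conditional expectation: the map takes
values in the algebra `𝒴` of functions of `Ŷ`, pulls functions of `Ŷ` out on the left, and
has the iterated expectation property with respect to `ρ̂`. -/
def IsLeftCondExpMap {ι : Type*} [Fintype ι] (φ : ι → H) (ρ : H →ₗ[ℂ] H)
    (E : (H →ₗ[ℂ] H) → (H →ₗ[ℂ] H)) : Prop :=
  (∀ X : H →ₗ[ℂ] H, ∃ f : ι → ℂ, E X = opF φ f) ∧
  (∀ (f : ι → ℂ) (X : H →ₗ[ℂ] H), E (opF φ f ∘ₗ X) = opF φ f ∘ₗ E X) ∧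
  (∀ X : H →ₗ[ℂ] H, LinearMap.trace ℂ H (ρ ∘ₗ E X) = LinearMap.trace ℂ H (ρ ∘ₗ X))

section helpers
variable {ι : Type*} [Fintype ι]

lemma opF_basis (φ : OrthonormalBasis ι ℂ H) (f : ι → ℂ) (i : ι) :
    opF (fun i => φ i) f (φ i) = f i • φ i := by
  classical
  simp [opF, proj, LinearMap.sum_apply, OrthonormalBasis.inner_eq_ite, ite_smul]

lemma inner_opF (φ : OrthonormalBasis ι ℂ H) (f : ι → ℂ) (i : ι) (v : H) :
    (inner ℂ (φ i) (opF (fun i => φ i) f v) : ℂ) = f i * inner ℂ (φ i) v := by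
  classical
  simp [opF, proj, LinearMap.sum_apply, inner_sum, inner_smul_right,
    OrthonormalBasis.inner_eq_ite]

lemma opF_comp (φ : OrthonormalBasis ι ℂ H) (f g : ι → ℂ) :
    opF (fun i => φ i) f ∘ₗ opF (fun i => φ i) g = opF (fun i => φ i) (fun i => f i * g i) := by
  refine φ.toBasis.ext fun i => ?_
  simp [opF_basis, smul_smul, mul_comm]

lemma trace_opF (φ : OrthonormalBasis ι ℂ H) (ρ : H →ₗ[ℂ] H) (f : ι → ℂ) :
    LinearMap.trace ℂ H (ρ ∘ₗ opF (fun i => φ i) f) = ∑ i, f i * inner ℂ (φ i) (ρ (φ i)) := by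
  rw [LinearMap.trace_eq_sum_inner _ φ]
  simp [opF_basis, inner_smul_right]

lemma trace_swap (φ : OrthonormalBasis ι ℂ H) (ρ X : H →ₗ[ℂ] H) :
    LinearMap.trace ℂ H (ρ ∘ₗ X) = ∑ i, inner ℂ (φ i) (X (ρ (φ i))) := by
  rw [LinearMap.trace_comp_comm', LinearMap.trace_eq_sum_inner _ φ]
  simp

lemma EcondL_eq (φ : ι → H) (ρ X : H →ₗ[ℂ] H) :
    EcondL φ ρ X = opF φ (fun i => (inner ℂ (φ i) (X (ρ (φ i))) : ℂ) / inner ℂ (φ i) (ρ (φ i))) :=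
  rfl

end helpers

/-- there is a unique map `ℰ : 𝓛(H) → 𝒴` with `ℰ(f(Ŷ)X̂) = f(Ŷ)ℰ(X̂)` and
`Tr(ρ̂ ℰ(X̂)) = Tr(ρ̂ X̂)`; it is `X̂ ↦ 𝔼^ℓ_ρ̂(X̂|Ŷ)`. -/
theorem stmt6 {ι : Type*} [Fintype ι] (φ : OrthonormalBasis ι ℂ H)
    (Y : H →ₗ[ℂ] H) (y : ι → ℝ) (hy : Function.Injective y)
    (hY : ∀ i, Y (φ i) = (y i : ℂ) • φ i)
    (ρ : H →ₗ[ℂ] H) (hpos : ∀ v, 0 ≤ (inner ℂ v (ρ v) : ℂ))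
    (htr : LinearMap.trace ℂ H ρ = 1)
    (hρ : ∀ i, (inner ℂ (φ i) (ρ (φ i)) : ℂ) ≠ 0) :
    (∃! E : (H →ₗ[ℂ] H) → (H →ₗ[ℂ] H), IsLeftCondExpMap (fun i => φ i) ρ E) ∧
    (∀ E : (H →ₗ[ℂ] H) → (H →ₗ[ℂ] H), IsLeftCondExpMap (fun i => φ i) ρ E →
      E = fun X => EcondL (fun i => φ i) ρ X) := by
  classical
  have huniq : ∀ E : (H →ₗ[ℂ] H) → (H →ₗ[ℂ] H), IsLeftCondExpMap (fun i => φ i) ρ E →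
      E = fun X => EcondL (fun i => φ i) ρ X := by
    rintro E ⟨h1, h2, h3⟩
    funext X
    obtain ⟨h, hh⟩ := h1 X
    rw [hh, EcondL_eq]
    congr 1
    funext i
    have key := h3 (opF (fun i => φ i) (Pi.single i 1) ∘ₗ X)
    rw [h2, hh, opF_comp, trace_opF, trace_swap φ] at key
    simp only [LinearMap.comp_apply, inner_opF] at key
    rw [eq_div_iff (hρ i)]
    simpa [Pi.single_apply] using key
  refine ⟨⟨fun X => EcondL (fun i => φ i) ρ X, ⟨fun X => ⟨_, EcondL_eq _ _ _⟩, ?_, ?_⟩, huniq⟩, huniq⟩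
  · intro f X
    simp only [EcondL_eq, opF_comp, LinearMap.comp_apply, inner_opF, mul_div_assoc]
  · intro X
    simp only [EcondL_eq]
    rw [trace_opF, trace_swap φ]
    exact Finset.sum_congr rfl fun i _ => div_mul_cancel₀ _ (hρ i)
end
end

section
/- Let H be a finite-dimensional complex Hilbert space, Â and B̂ self-adjoint operators with nondegenerate spectra satisfying ⟨φ_a^Â, φ_b^B̂⟩ ≠ 0 for all (a,b), let (S_{a,b}) be a Born-compatible frame for Â and B̂ forming a basis of 𝓛(H) with dual frame (T_{a,b}), and let ρ̂ be a density matrix with ⟨φ_b^B̂, ρ̂ φ_b^B̂⟩ ≠ 0 for all b. Then for every X̂ ∈ 𝓛(H), the Q-conditional expectation satisfies the iterated-expectation property: Tr(ρ̂ · 𝔼^Q_ρ̂(X̂|B̂)) = Tr(ρ̂ X̂). -/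
open scoped ComplexOrder
noncomputable section

variable {H : Type*} [NormedAddCommGroup H] [InnerProductSpace ℂ H] [FiniteDimensional ℂ H]

/-- The `Q`-conditional expectation
`𝔼^Q_ρ̂(X̂|B̂) = Σ_{(a,b)} conj(Q̃_{a,b}(X̂†)) (Q_{a,b}(ρ̂)/⟨φ_b^B̂, ρ̂ φ_b^B̂⟩) Π_b^B̂`,
where `Q_{a,b}(ρ̂) = Tr(ρ̂ S†_{a,b})` and `Q̃_{a,b}(X̂) = Tr(X̂ T†_{a,b})`. -/
def QcondExp {ιA ιB : Type*} [Fintype ιA] [Fintype ιB] (φB : ιB → H)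
    (S T : ιA × ιB → (H →ₗ[ℂ] H)) (ρ X : H →ₗ[ℂ] H) : H →ₗ[ℂ] H :=
  ∑ p : ιA × ιB,
    ((starRingEnd ℂ)
        (LinearMap.trace ℂ H (LinearMap.adjoint X ∘ₗ LinearMap.adjoint (T p))) *
      (LinearMap.trace ℂ H (ρ ∘ₗ LinearMap.adjoint (S p)) /
        (inner ℂ (φB p.2) (ρ (φB p.2)) : ℂ))) • proj (φB p.2)

theorem aux_comp_sum {ι : Type*} [Fintype ι] (f : H →ₗ[ℂ] H) (g : ι → (H →ₗ[ℂ] H)) :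
    f ∘ₗ (∑ i, g i) = ∑ i, f ∘ₗ g i := by
  ext x
  simp

theorem aux_trace_adjoint {ι : Type*} [Fintype ι] (φ : OrthonormalBasis ι ℂ H) (Y : H →ₗ[ℂ] H) :
    (starRingEnd ℂ) (LinearMap.trace ℂ H (LinearMap.adjoint Y)) = LinearMap.trace ℂ H Y := by
  rw [LinearMap.trace_eq_sum_inner _ φ, LinearMap.trace_eq_sum_inner _ φ, map_sum]
  refine Finset.sum_congr rfl fun i _ => ?_
  rw [LinearMap.adjoint_inner_right, inner_conj_symm]

theorem aux_trace_proj {ι : Type*} [Fintype ι] (φ : OrthonormalBasis ι ℂ H) (ρ : H →ₗ[ℂ] H)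
    (i : ι) : LinearMap.trace ℂ H (ρ ∘ₗ proj (φ i)) = inner ℂ (φ i) (ρ (φ i)) := by
  classical
  rw [LinearMap.trace_eq_sum_inner _ φ, Finset.sum_eq_single i]
  · simp [proj]
  · intro j _ hj
    have : inner ℂ (φ i) (φ j) = 0 := φ.orthonormal.2 hj.symm
    simp [proj, this]
  · simp

/-- iterated-expectation property of the `Q`-conditional expectation,
for any Born-compatible frame `(S_{a,b})` with dual frame `(T_{a,b})`:
`Tr(ρ̂ 𝔼^Q_ρ̂(X̂|B̂)) = Tr(ρ̂ X̂)`. -/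
theorem stmt12 {ιA ιB : Type*} [Fintype ιA] [Fintype ιB] [DecidableEq ιA] [DecidableEq ιB]
    (φA : OrthonormalBasis ιA ℂ H) (φB : OrthonormalBasis ιB ℂ H)
    (A B : H →ₗ[ℂ] H) (α : ιA → ℝ) (β : ιB → ℝ)
    (hα : Function.Injective α) (hβ : Function.Injective β)
    (hA : ∀ a, A (φA a) = (α a : ℂ) • φA a) (hB : ∀ b, B (φB b) = (β b : ℂ) • φB b)
    (hAB : ∀ (a : ιA) (b : ιB), (inner ℂ (φA a) (φB b) : ℂ) ≠ 0)
    (S T : ιA × ιB → (H →ₗ[ℂ] H))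
    (hBornB : ∀ b₀ : ιB, ∑ a : ιA, LinearMap.adjoint (S (a, b₀)) = proj (φB b₀))
    (hBornA : ∀ a₀ : ιA, ∑ b : ιB, LinearMap.adjoint (S (a₀, b)) = proj (φA a₀))
    (hindep : LinearIndependent ℂ S)
    (hspan : Submodule.span ℂ (Set.range S) = ⊤)
    (hdual : ∀ p q : ιA × ιB,
      LinearMap.trace ℂ H (T p ∘ₗ LinearMap.adjoint (S q)) = if p = q then 1 else 0)
    (ρ : H →ₗ[ℂ] H) (hpos : ∀ v : H, 0 ≤ (inner ℂ v (ρ v) : ℂ))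
    (htr : LinearMap.trace ℂ H ρ = 1)
    (hρB : ∀ b : ιB, (inner ℂ (φB b) (ρ (φB b)) : ℂ) ≠ 0)
    (X : H →ₗ[ℂ] H) :
    LinearMap.trace ℂ H (ρ ∘ₗ QcondExp (fun b => φB b) S T ρ X) =
      LinearMap.trace ℂ H (ρ ∘ₗ X) := by
  have hX : LinearMap.adjoint X ∈ Submodule.span ℂ (Set.range S) := by
    rw [hspan]; trivial
  obtain ⟨c, hc⟩ := (Submodule.mem_span_range_iff_exists_fun ℂ).1 hX
  have hX2 : X = ∑ p, (starRingEnd ℂ) (c p) • LinearMap.adjoint (S p) := by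
    rw [← LinearMap.adjoint_adjoint X, ← hc, map_sum]
    simp only [map_smulₛₗ]
  have hT : ∀ q, LinearMap.trace ℂ H (T q ∘ₗ X) = (starRingEnd ℂ) (c q) := by
    intro q
    rw [hX2, aux_comp_sum, map_sum]
    simp [LinearMap.comp_smul, hdual]
  have hL : LinearMap.trace ℂ H (ρ ∘ₗ QcondExp (fun b => φB b) S T ρ X) =
      ∑ p, (starRingEnd ℂ) (c p) * LinearMap.trace ℂ H (ρ ∘ₗ LinearMap.adjoint (S p)) := by
    unfold QcondExp
    rw [aux_comp_sum, map_sum]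
    refine Finset.sum_congr rfl fun p _ => ?_
    rw [LinearMap.comp_smul, map_smul, aux_trace_proj, ← LinearMap.adjoint_comp,
      aux_trace_adjoint φB, hT, smul_eq_mul, mul_assoc, div_mul_cancel₀ _ (hρB p.2)]
  rw [hL]
  conv_rhs => rw [hX2]
  rw [aux_comp_sum, map_sum]
  simp [LinearMap.comp_smul]
end
end

section
/- Let H be a finite-dimensional complex Hilbert space, Â and B̂ self-adjoint operators with nondegenerate spectra satisfying ⟨φ_a^Â, φ_b^B̂⟩ ≠ 0 for all (a,b), let (S_{a,b}) be a Born-compatible frame for Â and B̂ forming a basis of 𝓛(H) with dual frame (T_{a,b}), and let ρ̂ be a density matrix with ⟨φ_b^B̂, ρ̂ φ_b^B̂⟩ ≠ 0 for all b. Then for every (a,b) ∈ σ(Â)×σ(B̂), the quasiprobability is recovered from the Q-conditional expectation: Q_{a,b}(ρ̂) = Tr(ρ̂ S†_{a,b}) = Tr(ρ̂ · 𝔼^Q_ρ̂(S†_{a,b}|B̂)). -/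
open scoped ComplexOrder
noncomputable section

variable {H : Type*} [NormedAddCommGroup H] [InnerProductSpace ℂ H] [FiniteDimensional ℂ H]

theorem conj_trace_aux {ι : Type*} [Fintype ι] (b : OrthonormalBasis ι ℂ H) (X Y : H →ₗ[ℂ] H) :
    (starRingEnd ℂ) (LinearMap.trace ℂ H (X ∘ₗ LinearMap.adjoint Y)) =
      LinearMap.trace ℂ H (Y ∘ₗ LinearMap.adjoint X) := by
  rw [LinearMap.trace_eq_sum_inner _ b, LinearMap.trace_eq_sum_inner _ b, map_sum]
  refine Finset.sum_congr rfl fun i _ => ?_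
  rw [inner_conj_symm, LinearMap.comp_apply, LinearMap.comp_apply,
    ← LinearMap.adjoint_inner_right, LinearMap.adjoint_inner_left]

theorem trace_proj_aux {ι : Type*} [Fintype ι] (b : OrthonormalBasis ι ℂ H) (X : H →ₗ[ℂ] H)
    (v : H) : LinearMap.trace ℂ H (X ∘ₗ proj v) = inner ℂ v (X v) := by
  rw [LinearMap.trace_eq_sum_inner _ b, ← b.sum_inner_mul_inner]
  refine Finset.sum_congr rfl fun i _ => ?_
  simp [proj, inner_smul_right]

/-- the quasiprobability is recovered from the `Q`-conditional expectation:
`Q_{a,b}(ρ̂) = Tr(ρ̂ S†_{a,b}) = Tr(ρ̂ 𝔼^Q_ρ̂(S†_{a,b}|B̂))` for every `(a,b)`. -/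
theorem stmt13 {ιA ιB : Type*} [Fintype ιA] [Fintype ιB] [DecidableEq ιA] [DecidableEq ιB]
    (φA : OrthonormalBasis ιA ℂ H) (φB : OrthonormalBasis ιB ℂ H)
    (A B : H →ₗ[ℂ] H) (α : ιA → ℝ) (β : ιB → ℝ)
    (hα : Function.Injective α) (hβ : Function.Injective β)
    (hA : ∀ a, A (φA a) = (α a : ℂ) • φA a) (hB : ∀ b, B (φB b) = (β b : ℂ) • φB b)
    (hAB : ∀ (a : ιA) (b : ιB), (inner ℂ (φA a) (φB b) : ℂ) ≠ 0)
    (S T : ιA × ιB → (H →ₗ[ℂ] H))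
    (hBornB : ∀ b₀ : ιB, ∑ a : ιA, LinearMap.adjoint (S (a, b₀)) = proj (φB b₀))
    (hBornA : ∀ a₀ : ιA, ∑ b : ιB, LinearMap.adjoint (S (a₀, b)) = proj (φA a₀))
    (hindep : LinearIndependent ℂ S)
    (hspan : Submodule.span ℂ (Set.range S) = ⊤)
    (hdual : ∀ p q : ιA × ιB,
      LinearMap.trace ℂ H (T p ∘ₗ LinearMap.adjoint (S q)) = if p = q then 1 else 0)
    (ρ : H →ₗ[ℂ] H) (hpos : ∀ v : H, 0 ≤ (inner ℂ v (ρ v) : ℂ))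
    (htr : LinearMap.trace ℂ H ρ = 1)
    (hρB : ∀ b : ιB, (inner ℂ (φB b) (ρ (φB b)) : ℂ) ≠ 0) :
    ∀ p : ιA × ιB,
      LinearMap.trace ℂ H (ρ ∘ₗ LinearMap.adjoint (S p)) =
        LinearMap.trace ℂ H
          (ρ ∘ₗ QcondExp (fun b => φB b) S T ρ (LinearMap.adjoint (S p))) := by
  intro p
  have h : QcondExp (fun b => φB b) S T ρ (LinearMap.adjoint (S p)) =
      (LinearMap.trace ℂ H (ρ ∘ₗ LinearMap.adjoint (S p)) /
        (inner ℂ (φB p.2) (ρ (φB p.2)) : ℂ)) • proj (φB p.2) := by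
    unfold QcondExp
    rw [Finset.sum_eq_single p]
    · rw [LinearMap.adjoint_adjoint, conj_trace_aux φB, hdual, if_pos rfl, one_mul]
    · intro q _ hq
      rw [LinearMap.adjoint_adjoint, conj_trace_aux φB, hdual, if_neg hq, zero_mul, zero_smul]
    · intro h
      exact absurd (Finset.mem_univ p) h
  rw [h, LinearMap.comp_smul, map_smul, trace_proj_aux φB, smul_eq_mul,
    div_mul_cancel₀ _ (hρB p.2)]
end
end

section
/- Let H be a finite-dimensional complex Hilbert space, Â and B̂ self-adjoint operators with nondegenerate spectra satisfying ⟨φ_a^Â, φ_b^B̂⟩ ≠ 0 for all (a,b). Then the family T^ℓ_{a,b} = (1/|⟨φ_a^Â, φ_b^B̂⟩|²) Π_a^Â Π_b^B̂ is the dual frame of the left Kirkwood-Dirac frame S^ℓ_{a,b} = Π_a^Â Π_b^B̂, i.e., Tr(T^ℓ_{a',b'} (S^ℓ_{a,b})†) = δ_{a,a'} δ_{b,b'} for all (a,b),(a',b') ∈ σ(Â)×σ(B̂); similarly T^r_{a,b} = (1/|⟨φ_a^Â, φ_b^B̂⟩|²) Π_b^B̂ Π_a^Â is the dual frame of S^r_{a,b}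 = Π_b^B̂ Π_a^Â. -/
open scoped ComplexOrder
noncomputable section

variable {H : Type*} [NormedAddCommGroup H] [InnerProductSpace ℂ H] [FiniteDimensional ℂ H]

theorem proj_adjoint_aux (v : H) : LinearMap.adjoint (proj v) = proj v := by
  symm
  rw [LinearMap.eq_adjoint_iff]
  intro x y
  simp [proj, inner_smul_left, inner_smul_right, mul_comm]

theorem trace_proj_aux_s14 (u v w x : H) :
    LinearMap.trace ℂ H ((proj u ∘ₗ proj v) ∘ₗ (proj w ∘ₗ proj x)) =
      inner ℂ x u * inner ℂ u v * inner ℂ v w * inner ℂ w x := by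
  have h : (proj u ∘ₗ proj v) ∘ₗ (proj w ∘ₗ proj x) =
      (inner ℂ u v * inner ℂ v w * inner ℂ w x : ℂ) •
        ((innerSL ℂ x : H →L[ℂ] ℂ) : H →ₗ[ℂ] ℂ).smulRight u := by
    ext z
    simp [proj, inner_smul_right, smul_smul]
    congr 1
    ring
  rw [h, map_smul, LinearMap.trace_smulRight]
  simp
  ring

theorem dual_aux {ι κ : Type*} [DecidableEq ι] [DecidableEq κ] [Fintype ι] [Fintype κ]
    (φ : OrthonormalBasis ι ℂ H) (ψ : OrthonormalBasis κ ℂ H) (a a' : ι) (b b' : κ)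
    (h : (inner ℂ (φ a') (ψ b') : ℂ) ≠ 0) :
    LinearMap.trace ℂ H
          ((((1 : ℂ) / ((‖(inner ℂ (φ a') (ψ b') : ℂ)‖ ^ 2 : ℝ) : ℂ)) •
              (proj (φ a') ∘ₗ proj (ψ b'))) ∘ₗ
            LinearMap.adjoint (proj (φ a) ∘ₗ proj (ψ b))) =
        if a = a' ∧ b = b' then 1 else 0 := by
  rw [LinearMap.adjoint_comp, proj_adjoint_aux, proj_adjoint_aux, LinearMap.smul_comp, map_smul,
    trace_proj_aux_s14, orthonormal_iff_ite.mp φ.orthonormal, orthonormal_iff_ite.mp ψ.orthonormal]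
  by_cases h1 : a = a'
  · by_cases h2 : b = b'
    · subst h1 h2
      have h3 : (inner ℂ (φ a) (ψ b) : ℂ) * inner ℂ (ψ b) (φ a) =
          ((‖(inner ℂ (φ a) (ψ b) : ℂ)‖ ^ 2 : ℝ) : ℂ) := by
        rw [← inner_conj_symm (ψ b) (φ a), RCLike.mul_conj]
        simp
      have h4 : ((‖(inner ℂ (φ a) (ψ b) : ℂ)‖ ^ 2 : ℝ) : ℂ) ≠ 0 := by
        exact_mod_cast pow_ne_zero 2 (norm_ne_zero_iff.mpr h)
      simp only [if_true, one_mul, mul_one, and_self, h3, smul_eq_mul]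
      exact one_div_mul_cancel h4
    · simp [h2, Ne.symm h2, eq_comm]
  · simp [h1]

/-- `T^ℓ_{a,b} = |⟨φ_a^Â, φ_b^B̂⟩|⁻² Π_a^Â Π_b^B̂` is the dual frame of the left
Kirkwood-Dirac frame `S^ℓ_{a,b} = Π_a^Â Π_b^B̂`, i.e.
`Tr(T^ℓ_{a',b'} (S^ℓ_{a,b})†) = δ_{a,a'}δ_{b,b'}`; similarly
`T^r_{a,b} = |⟨φ_a^Â, φ_b^B̂⟩|⁻² Π_b^B̂ Π_a^Â` is the dual frame of
`S^r_{a,b} = Π_b^B̂ Π_a^Â`. -/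
theorem stmt14 {ιA ιB : Type*} [Fintype ιA] [Fintype ιB] [DecidableEq ιA] [DecidableEq ιB]
    (φA : OrthonormalBasis ιA ℂ H) (φB : OrthonormalBasis ιB ℂ H)
    (A B : H →ₗ[ℂ] H) (α : ιA → ℝ) (β : ιB → ℝ)
    (hα : Function.Injective α) (hβ : Function.Injective β)
    (hA : ∀ a, A (φA a) = (α a : ℂ) • φA a) (hB : ∀ b, B (φB b) = (β b : ℂ) • φB b)
    (hAB : ∀ (a : ιA) (b : ιB), (inner ℂ (φA a) (φB b) : ℂ) ≠ 0) :
    (∀ (a a' : ιA) (b b' : ιB),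
      LinearMap.trace ℂ H
          ((((1 : ℂ) / ((‖(inner ℂ (φA a') (φB b') : ℂ)‖ ^ 2 : ℝ) : ℂ)) •
              (proj (φA a') ∘ₗ proj (φB b'))) ∘ₗ
            LinearMap.adjoint (proj (φA a) ∘ₗ proj (φB b))) =
        if a = a' ∧ b = b' then 1 else 0) ∧
    (∀ (a a' : ιA) (b b' : ιB),
      LinearMap.trace ℂ H
          ((((1 : ℂ) / ((‖(inner ℂ (φA a') (φB b') : ℂ)‖ ^ 2 : ℝ) : ℂ)) •
              (proj (φB b') ∘ₗ proj (φA a'))) ∘ₗ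
            LinearMap.adjoint (proj (φB b) ∘ₗ proj (φA a))) =
        if a = a' ∧ b = b' then 1 else 0) := by
  refine ⟨fun a a' b b' => dual_aux φA φB a a' b b' (hAB a' b'), fun a a' b b' => ?_⟩
  have h : (inner ℂ (φB b') (φA a') : ℂ) ≠ 0 := by
    rw [Ne, inner_eq_zero_symm]
    exact hAB a' b'
  have key := dual_aux φB φA b b' a a' h
  rw [norm_inner_symm] at key
  rw [key]
  simp only [and_comm]
end
end

section
/- Let H be a finite-dimensional complex Hilbert space, Â and B̂ self-adjoint operators with nondegenerate spectra satisfying ⟨φ_a^Â, φ_b^B̂⟩ ≠ 0 for all (a,b), and ρ̂ a density matrix with ⟨φ_b^B̂, ρ̂ φ_b^B̂⟩ ≠ 0 for all b ∈ σ(B̂). Then the Q-conditional expectation associated to the left Kirkwood-Dirac representation coincides with the left quantum conditional expectation: for every X̂ ∈ 𝓛(H), Σ_{(a,b)} conj(Q̃^{KD,ℓ}_{a,b}(X̂†)) · (Q^{KD,ℓ}_{a,b}(ρ̂)/⟨φ_b^B̂, ρ̂ φ_b^B̂⟩) · Π_b^B̂ = Σ_{b∈σ(B̂)} (⟨φ_b^B̂,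 X̂ρ̂ φ_b^B̂⟩/⟨φ_b^B̂, ρ̂ φ_b^B̂⟩) Π_b^B̂ = 𝔼^ℓ_ρ̂(X̂|B̂); similarly, the Q-conditional expectation associated to the right Kirkwood-Dirac representation equals 𝔼^r_ρ̂(X̂|B̂) := Σ_b (⟨φ_b^B̂, ρ̂X̂ φ_b^B̂⟩/⟨φ_b^B̂, ρ̂ φ_b^B̂⟩) Π_b^B̂. -/
open scoped ComplexOrder
noncomputable section

variable {H : Type*} [NormedAddCommGroup H] [InnerProductSpace ℂ H] [FiniteDimensional ℂ H]

/-- The right quantum conditional expectation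
`𝔼^r_ρ̂(X̂|B̂) = Σ_b (⟨φ_b^B̂, ρ̂X̂ φ_b^B̂⟩/⟨φ_b^B̂, ρ̂ φ_b^B̂⟩) Π_b^B̂`. -/
def EcondR {ι : Type*} [Fintype ι] (φ : ι → H) (ρ X : H →ₗ[ℂ] H) : H →ₗ[ℂ] H :=
  ∑ i, ((inner ℂ (φ i) ((ρ ∘ₗ X) (φ i)) : ℂ) / (inner ℂ (φ i) (ρ (φ i)) : ℂ)) • proj (φ i)

/-- the `Q`-conditional expectation associated to the left (resp. right)
Kirkwood-Dirac representation, `Σ_{(a,b)} conj(Q̃^{KD,ℓ}_{a,b}(X̂†)) ·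
(Q^{KD,ℓ}_{a,b}(ρ̂)/⟨φ_b^B̂, ρ̂ φ_b^B̂⟩) · Π_b^B̂`, coincides with the left (resp. right)
quantum conditional expectation `𝔼^ℓ_ρ̂(X̂|B̂)` (resp. `𝔼^r_ρ̂(X̂|B̂)`). -/
theorem stmt16 {ιA ιB : Type*} [Fintype ιA] [Fintype ιB]
    (φA : OrthonormalBasis ιA ℂ H) (φB : OrthonormalBasis ιB ℂ H)
    (A B : H →ₗ[ℂ] H) (α : ιA → ℝ) (β : ιB → ℝ)
    (hα : Function.Injective α) (hβ : Function.Injective β)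
    (hA : ∀ a, A (φA a) = (α a : ℂ) • φA a) (hB : ∀ b, B (φB b) = (β b : ℂ) • φB b)
    (hAB : ∀ (a : ιA) (b : ιB), (inner ℂ (φA a) (φB b) : ℂ) ≠ 0)
    (ρ : H →ₗ[ℂ] H) (hpos : ∀ v : H, 0 ≤ (inner ℂ v (ρ v) : ℂ))
    (htr : LinearMap.trace ℂ H ρ = 1)
    (hρB : ∀ b : ιB, (inner ℂ (φB b) (ρ (φB b)) : ℂ) ≠ 0) :
    (∀ X : H →ₗ[ℂ] H,
      (∑ p : ιA × ιB,
        ((starRingEnd ℂ)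
            ((inner ℂ (φA p.1) ((LinearMap.adjoint X) (φB p.2)) : ℂ) /
              (inner ℂ (φA p.1) (φB p.2) : ℂ)) *
          (((inner ℂ (φB p.2) (φA p.1) : ℂ) * (inner ℂ (φA p.1) (ρ (φB p.2)) : ℂ)) /
            (inner ℂ (φB p.2) (ρ (φB p.2)) : ℂ))) • proj (φB p.2)) =
        EcondL (fun b => φB b) ρ X) ∧
    (∀ X : H →ₗ[ℂ] H,
      (∑ p : ιA × ιB,
        ((starRingEnd ℂ)
            ((inner ℂ (φB p.2) ((LinearMap.adjoint X) (φA p.1)) : ℂ) /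
              (inner ℂ (φB p.2) (φA p.1) : ℂ)) *
          (((inner ℂ (φA p.1) (φB p.2) : ℂ) * (inner ℂ (φB p.2) (ρ (φA p.1)) : ℂ)) /
            (inner ℂ (φB p.2) (ρ (φB p.2)) : ℂ))) • proj (φB p.2)) =
        EcondR (fun b => φB b) ρ X) := by
  have key : ∀ (X Y : H →ₗ[ℂ] H) (b : ιB),
      ∑ a, (inner ℂ (φB b) (X (φA a)) : ℂ) * inner ℂ (φA a) (Y (φB b)) =
        inner ℂ (φB b) ((X ∘ₗ Y) (φB b)) := by
    intro X Y b
    have h := φA.sum_inner_mul_inner (LinearMap.adjoint X (φB b)) (Y (φB b))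
    simpa only [LinearMap.adjoint_inner_left, LinearMap.comp_apply] using h
  have hBA : ∀ (a : ιA) (b : ιB), (inner ℂ (φB b) (φA a) : ℂ) ≠ 0 := by
    intro a b h
    exact hAB a b (inner_eq_zero_symm.mp h)
  refine ⟨fun X => ?_, fun X => ?_⟩
  · rw [EcondL, Fintype.sum_prod_type_right]
    refine Finset.sum_congr rfl fun b _ => ?_
    simp only
    rw [← Finset.sum_smul, ← key X ρ b, Finset.sum_div]
    congr 1
    refine Finset.sum_congr rfl fun a _ => ?_
    rw [map_div₀, inner_conj_symm, inner_conj_symm, LinearMap.adjoint_inner_left]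
    have h1 := hBA a b
    have h2 := hρB b
    field_simp
  · rw [EcondR, Fintype.sum_prod_type_right]
    refine Finset.sum_congr rfl fun b _ => ?_
    simp only
    rw [← Finset.sum_smul, ← key ρ X b, Finset.sum_div]
    congr 1
    refine Finset.sum_congr rfl fun a _ => ?_
    rw [map_div₀, inner_conj_symm, inner_conj_symm, LinearMap.adjoint_inner_left]
    have h1 := hAB a b
    have h2 := hρB b
    field_simp
end
end
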